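/- Let N ≥ 1, let W_1, …, W_N be nonnegative reals with ∑_{j=1}^N W_j = 1, let θ_1, …, θ_N ∈ ℝ, and set θ̄ = ∑_{j=1}^N W_j θ_j and V = ∑_{j=1}^N W_j (θ_j − θ̄)². Let h ∈ (0, 1), set a = √(1 − h²), and define the shrunk kernel locations m_j = a·θ_j + (1 − a)·θ̄. Then the Gaussian mixture measure μ = ∑_{j=1}^N W_j · N(m_j, h² V) on ℝ satisfies ∫ x dμ(x) = θ̄ and ∫ (x − θ̄)² dμ(x) = V; that is, the mixture has the same mean and the same variance as the weighted particle distribution ∑_j W_j δ_{θ_j}. -/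

import Mathlib

/-!
Integration against the mixture is the `W`-weighted sum of integrals against the normal components,
because each integrand is integrable (`integral_mixture`). For the mean this gives
`∑ W_j m_j = θ̄`, the weighted deviations of the particles from `θ̄` summing to zero. For the
variance, the second moment of `N(m_j, h² V)` about `θ̄` is `h² V + (m_j - θ̄)²`
(`integral_sq_sub_gaussianReal`), and `m_j - θ̄ = a (θ_j - θ̄)`. Averaging over `j` yields
`h² V + a² V`, which is `V` since `a² + h² = 1`.
-/

open MeasureTheory ProbabilityTheory

lemma integral_mixture {N : ℕ} (W : Fin N → ℝ) (hW : ∀ j, 0 ≤ W j) (ν : Fin N → Measure ℝ)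
    (f : ℝ → ℝ) (hf : ∀ j, Integrable f (ν j)) :
    ∫ x, f x ∂(∑ j, ENNReal.ofReal (W j) • ν j) = ∑ j, W j * ∫ x, f x ∂(ν j) := by
  rw [integral_finsetSum_measure fun j _ => (hf j).smul_measure ENNReal.ofReal_ne_top]
  refine Finset.sum_congr rfl fun j _ => ?_
  rw [integral_smul_measure, ENNReal.toReal_ofReal (hW j), smul_eq_mul]

lemma memLp_sub_const_gaussianReal (m c : ℝ) (v : NNReal) :
    MemLp (fun x => x - c) 2 (gaussianReal m v) :=
  (memLp_id_gaussianReal 2).sub (memLp_const c)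

/-- The second moment of a normal law about an arbitrary point `c`: variance plus squared bias. -/
lemma integral_sq_sub_gaussianReal (m c : ℝ) (v : NNReal) :
    ∫ x, (x - c) ^ 2 ∂(gaussianReal m v) = v + (m - c) ^ 2 := by
  have hvar := variance_eq_sub (memLp_sub_const_gaussianReal m c v)
  have hmean : ∫ x, (x - c) ∂(gaussianReal m v) = m - c := by
    have hid : Integrable (fun x : ℝ => x) (gaussianReal m v) :=
      (memLp_id_gaussianReal 1).integrable (by simp)
    rw [integral_sub hid (integrable_const c)]
    simp
  rw [variance_sub_const (by fun_prop), variance_fun_id_gaussianReal, hmean] at hvar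
  simp only [Pi.pow_apply] at hvar
  linarith

/-- **Liu–West kernel shrinkage preserves the first two moments**: if the kernel locations are
shrunk as `m_j = a θ_j + (1 − a) θ̄` with `a = √(1 − h²)`, then the Gaussian mixture
`∑_j W_j · N(m_j, h² V)` has the same mean `θ̄` and the same variance `V` as the weighted
particle distribution `∑_j W_j δ_{θ_j}`. -/
theorem gaussian_mixture_shrinkage_moments
    (N : ℕ) (hN : 1 ≤ N)
    (W θ : Fin N → ℝ)
    (hW_nonneg : ∀ j, 0 ≤ W j) (hW_sum : ∑ j, W j = 1)
    (θbar : ℝ) (hθbar : θbar = ∑ j, W j * θ j)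
    (V : ℝ) (hV : V = ∑ j, W j * (θ j - θbar) ^ 2)
    (h : ℝ) (hh : h ∈ Set.Ioo (0 : ℝ) 1)
    (a : ℝ) (ha : a = Real.sqrt (1 - h ^ 2))
    (m : Fin N → ℝ) (hm : ∀ j, m j = a * θ j + (1 - a) * θbar)
    (μ : Measure ℝ)
    (hμ : μ = ∑ j : Fin N,
      ENNReal.ofReal (W j) • gaussianReal (m j) ((h ^ 2 * V).toNNReal)) :
    (∫ x, x ∂μ) = θbar ∧ (∫ x, (x - θbar) ^ 2 ∂μ) = V := by
  have ha2 : a ^ 2 = 1 - h ^ 2 := by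
    rw [ha, Real.sq_sqrt]
    nlinarith [hh.1, hh.2]
  have hV0 : 0 ≤ V := hV ▸ Finset.sum_nonneg fun j _ => mul_nonneg (hW_nonneg j) (sq_nonneg _)
  subst hμ
  constructor
  · rw [integral_mixture W hW_nonneg _ (fun x => x)
      fun j => (memLp_id_gaussianReal 1).integrable (by simp)]
    calc ∑ j, W j * ∫ x, x ∂(gaussianReal (m j) (h ^ 2 * V).toNNReal)
        = ∑ j, (a * (W j * θ j) + W j * ((1 - a) * θbar)) := by
          refine Finset.sum_congr rfl fun j _ => ?_
          rw [integral_id_gaussianReal, hm]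
          ring
      _ = θbar := by
          rw [Finset.sum_add_distrib, ← Finset.mul_sum, ← Finset.sum_mul, hW_sum, ← hθbar]
          ring
  · rw [integral_mixture W hW_nonneg _ (fun x => (x - θbar) ^ 2)
      fun j => (memLp_sub_const_gaussianReal _ _ _).integrable_sq]
    calc ∑ j, W j * ∫ x, (x - θbar) ^ 2 ∂(gaussianReal (m j) (h ^ 2 * V).toNNReal)
        = ∑ j, (W j * (h ^ 2 * V) + a ^ 2 * (W j * (θ j - θbar) ^ 2)) := by
          refine Finset.sum_congr rfl fun j _ => ?_
          rw [integral_sq_sub_gaussianReal, hm, Real.coe_toNNReal _ (by positivity)]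
          ring
      _ = V := by
          rw [Finset.sum_add_distrib, ← Finset.mul_sum, ← Finset.sum_mul, hW_sum, ← hV, ha2]
          ring
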